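/- Let |p|<1, n ≥ 2, and let a_1,…,a_n, b_1,…,b_{n-2} ∈ ℂ* with a_j a_k, a_j/a_k ∉ {p^m : m ∈ ℤ} for all j ≠ k. Then ∑_{k=1}^n a_k · [∏_{j=1}^{n-2} θ(a_k b_j;p)θ(a_k/b_j;p)] / [∏_{j≠k} θ(a_k a_j;p)θ(a_k/a_j;p)] = 0. -/

import Mathlib

noncomputable def qPochhammerInf (z q : ℂ) : ℂ := ∏' j : ℕ, (1 - z * q ^ j)

noncomputable def theta (z p : ℂ) : ℂ :=
  ∏' j : ℕ, (1 - z * p ^ j) * (1 - p ^ (j + 1) * z⁻¹)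

noncomputable def ellGamma (z p q : ℂ) : ℂ :=
  ∏' jk : ℕ × ℕ,
    (1 - z⁻¹ * p ^ (jk.1 + 1) * q ^ (jk.2 + 1)) / (1 - z * p ^ jk.1 * q ^ jk.2)

/-!
Fix `p ≠ 0`. A function holomorphic on the punctured plane with `f (p z) = c z ^ (-m) f z`, `c ≠ 0`,
has Laurent coefficients satisfying a two-term recursion of step `m`, so `m` consecutive ones
determine it, and any `m + 1` such functions are linearly dependent. For `m = 2` this yields the
three-term relation of Weierstrass for `[x, y] = x⁻¹ θ(x y) θ(x / y)`, which says that
`[x, y] = u(x) v(y) - v(x) u(y)` for suitable `u` and `v`. In the projective coordinate `u / v` the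
summands therefore become `Q(xₖ) / ∏ (xₖ - xⱼ)` with `deg Q ≤ n - 2`, and their sum is the
coefficient of `X ^ (n - 1)` in `Q`, by Lagrange interpolation at `n` points.
-/

open Filter Finset Metric Set Topology
open Real (circleAverage two_pi_pos)
open scoped Real

section CircleAverage

variable {E : Type*} [NormedAddCommGroup E]

lemma circleAverage_comp_mul_left [NormedSpace ℝ E] (f : ℂ → E) (a : ℂ) (r : ℝ) :
    circleAverage (fun z => f (a * z)) 0 r = circleAverage f 0 (‖a‖ * r) := by
  have hrotate (t : ℝ) : a * circleMap 0 r t = circleMap 0 (‖a‖ * r) (t + a.arg) := by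
    conv_lhs => rw [← Complex.norm_mul_exp_arg_mul_I a]
    simp only [circleMap_zero, Complex.ofReal_add, Complex.ofReal_mul, add_mul, Complex.exp_add]
    ring
  rw [Real.circleAverage_def, Real.circleAverage_eq_integral_add a.arg]
  simp only [hrotate]

lemma circleAverage_eq_of_differentiableOn_compl_singleton [NormedSpace ℂ E] {f : ℂ → E} {c : ℂ}
    (hf : DifferentiableOn ℂ f {c}ᶜ) {r R : ℝ} (hr : 0 < r) (hR : 0 < R) :
    circleAverage f c r = circleAverage f c R := by
  wlog hle : r ≤ R generalizing r R
  · exact (this hR hr (le_of_not_ge hle)).symm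
  have hne {z : ℂ} (hz : z ∉ ball c r) : z ∈ ({c}ᶜ : Set ℂ) := by
    rintro rfl
    exact hz (mem_ball_self hr)
  rw [Real.circleAverage_eq_circleIntegral hr.ne', Real.circleAverage_eq_circleIntegral hR.ne',
    Complex.circleIntegral_sub_center_inv_smul_eq_of_differentiable_on_annulus_off_countable hr hle
      countable_empty (hf.continuousOn.mono fun z hz => hne hz.2) fun z hz => ?_]
  exact hf.differentiableAt <| isOpen_compl_singleton.mem_nhds <|
    hne fun h => hz.1.2 (ball_subset_closedBall h)

lemma mul_toCircle_eq_circleMap (r x : ℝ) :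
    r * (AddCircle.toCircle (x : AddCircle (2 * π)) : ℂ) = circleMap 0 r x := by
  rw [AddCircle.toCircle_apply_mk, div_self two_pi_pos.ne', one_mul, Circle.coe_exp,
    circleMap_zero]

lemma fourierCoeff_comp_mul_toCircle [Fact (0 < 2 * π)] (f : ℂ → ℂ) {r : ℝ} (hr : r ≠ 0) (n : ℤ) :
    fourierCoeff (fun t : AddCircle (2 * π) => f (r * t.toCircle)) n =
      (r : ℂ) ^ n * circleAverage (fun z => z ^ (-n) * f z) 0 r := by
  have hrn : (r : ℂ) ^ n ≠ 0 := zpow_ne_zero n (Complex.ofReal_ne_zero.mpr hr)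
  have hterm (x : ℝ) : fourier (-n) (x : AddCircle (2 * π)) •
      f (r * (AddCircle.toCircle (x : AddCircle (2 * π)) : ℂ)) =
        (r : ℂ) ^ n * (circleMap 0 r x ^ (-n) * f (circleMap 0 r x)) := by
    rw [fourier_apply, AddCircle.toCircle_zsmul, Circle.coe_zpow, smul_eq_mul,
      ← mul_toCircle_eq_circleMap, mul_zpow, zpow_neg (r : ℂ), ← mul_assoc,
      mul_inv_cancel_left₀ hrn]
  rw [fourierCoeff_eq_intervalIntegral _ n 0, zero_add, one_div, Real.circleAverage_def]
  simp only [hterm]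
  rw [intervalIntegral.integral_const_mul, mul_smul_comm]

lemma eqOn_zero_of_circleAverage_zpow_mul_eq_zero {f : ℂ → ℂ} {r : ℝ} (hr : 0 < r)
    (hf : ContinuousOn f (sphere 0 r))
    (h : ∀ n : ℤ, circleAverage (fun z => z ^ n * f z) 0 r = 0) : EqOn f 0 (sphere 0 r) := by
  have : Fact (0 < 2 * π) := ⟨two_pi_pos⟩
  have hmem (t : AddCircle (2 * π)) : r * (t.toCircle : ℂ) ∈ sphere (0 : ℂ) r := by
    rw [mem_sphere_zero_iff_norm, norm_mul, Circle.norm_coe, Complex.norm_of_nonneg hr.le, mul_one]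
  let F : C(AddCircle (2 * π), ℂ) :=
    ⟨fun t => f (r * t.toCircle), hf.comp_continuous
      (continuous_const.mul (continuous_subtype_val.comp AddCircle.continuous_toCircle)) hmem⟩
  have hcoeff (n : ℤ) : fourierCoeff F n = 0 :=
    (fourierCoeff_comp_mul_toCircle f hr.ne' n).trans (by rw [h, mul_zero])
  intro z hz
  have hsum := has_pointwise_sum_fourier_series_of_summable
    (summable_zero.congr fun n => (hcoeff n).symm) (z.arg : AddCircle (2 * π))
  simp only [hcoeff, zero_smul] at hsum
  have hz' : r * (AddCircle.toCircle (z.arg : AddCircle (2 * π)) : ℂ) = z := by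
    rw [mul_toCircle_eq_circleMap, circleMap_zero, ← mem_sphere_zero_iff_norm.mp hz,
      Complex.norm_mul_exp_arg_mul_I]
  calc f z = F z.arg := congrArg f hz'.symm
    _ = 0 := hsum.unique hasSum_zero

end CircleAverage

section LaurentCoeff

/-- The `n`-th Laurent coefficient at the origin of a function holomorphic on the punctured plane,
as the mean value of `z ^ (-n) * f z` on the unit circle. -/
noncomputable def laurentCoeff (f : ℂ → ℂ) (n : ℤ) : ℂ :=
  circleAverage (fun z => z ^ (-n) * f z) 0 1

lemma differentiableOn_zpow_mul {f : ℂ → ℂ} (hf : DifferentiableOn ℂ f {0}ᶜ) (n : ℤ) :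
    DifferentiableOn ℂ (fun z => z ^ n * f z) {0}ᶜ :=
  (differentiableOn_zpow n _ (Or.inl (by simp))).mul hf

lemma laurentCoeff_eq_circleAverage {f : ℂ → ℂ} (hf : DifferentiableOn ℂ f {0}ᶜ) (n : ℤ) {r : ℝ}
    (hr : 0 < r) : laurentCoeff f n = circleAverage (fun z => z ^ (-n) * f z) 0 r :=
  circleAverage_eq_of_differentiableOn_compl_singleton (differentiableOn_zpow_mul hf _)
    one_pos hr

lemma laurentCoeff_comp_mul_left {f : ℂ → ℂ} (hf : DifferentiableOn ℂ f {0}ᶜ) {a : ℂ} (ha : a ≠ 0)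
    (n : ℤ) : laurentCoeff (fun z => f (a * z)) n = a ^ n * laurentCoeff f n := by
  have hscale (z : ℂ) : z ^ (-n) * f (a * z) = a ^ n • ((a * z) ^ (-n) * f (a * z)) := by
    rw [mul_zpow, smul_eq_mul, zpow_neg a, ← mul_assoc, mul_inv_cancel_left₀ (zpow_ne_zero n ha)]
  rw [laurentCoeff]
  simp only [hscale]
  rw [Real.circleAverage_fun_smul, circleAverage_comp_mul_left (fun z => z ^ (-n) * f z),
    ← laurentCoeff_eq_circleAverage hf n (mul_pos (norm_pos_iff.mpr ha) one_pos), smul_eq_mul]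

lemma laurentCoeff_const_mul (c : ℂ) (f : ℂ → ℂ) (n : ℤ) :
    laurentCoeff (fun z => c * f z) n = c * laurentCoeff f n := by
  rw [laurentCoeff, laurentCoeff, ← smul_eq_mul c, ← Real.circleAverage_fun_smul]
  exact congrArg (circleAverage · 0 1) (funext fun z => mul_left_comm _ _ _)

lemma laurentCoeff_congr {f g : ℂ → ℂ} (h : EqOn f g {0}ᶜ) (n : ℤ) :
    laurentCoeff f n = laurentCoeff g n :=
  Real.circleAverage_congr_sphere fun z hz => by
    have hz0 : z ≠ 0 := ne_zero_of_mem_sphere (by simp) ⟨z, hz⟩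
    simp only [h hz0]

lemma laurentCoeff_pow_mul (f : ℂ → ℂ) (m : ℕ) (n : ℤ) :
    laurentCoeff (fun z => z ^ m * f z) (n + m) = laurentCoeff f n :=
  Real.circleAverage_congr_sphere fun z hz => by
    have hz0 : z ≠ 0 := ne_zero_of_mem_sphere (by simp) ⟨z, hz⟩
    simp only [neg_add, zpow_add₀ hz0, zpow_neg, zpow_natCast]
    field_simp

lemma laurentCoeff_sum {ι : Type*} {s : Finset ι} {f : ι → ℂ → ℂ}
    (hf : ∀ i ∈ s, DifferentiableOn ℂ (f i) {0}ᶜ) (n : ℤ) :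
    laurentCoeff (fun z => ∑ i ∈ s, f i z) n = ∑ i ∈ s, laurentCoeff (f i) n := by
  simp only [laurentCoeff, mul_sum]
  refine Real.circleAverage_fun_sum fun i hi => ?_
  refine ((differentiableOn_zpow_mul (hf i hi) _).continuousOn.mono fun z hz => ?_).circleIntegrable
    zero_le_one
  exact ne_zero_of_mem_sphere one_ne_zero ⟨z, hz⟩

lemma eqOn_zero_of_laurentCoeff_eq_zero {f : ℂ → ℂ} (hf : DifferentiableOn ℂ f {0}ᶜ)
    (h : ∀ n, laurentCoeff f n = 0) : EqOn f 0 {0}ᶜ := by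
  intro z hz
  have hr : 0 < ‖z‖ := norm_pos_iff.mpr hz
  refine eqOn_zero_of_circleAverage_zpow_mul_eq_zero hr
    (hf.continuousOn.mono fun w hw => ne_zero_of_mem_sphere hr.ne' ⟨w, hw⟩) (fun n => ?_)
    (mem_sphere_zero_iff_norm.mpr rfl)
  simpa only [laurentCoeff_eq_circleAverage hf (-n) hr, neg_neg] using h (-n)

end LaurentCoeff

section MultiplicativeTheta

/-- Theta functions of degree `m` in multiplicative notation: the holomorphic functions on the
punctured plane with `f (p z) = c z ^ (-m) f z`. The values at `0` are irrelevant. -/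
structure IsMulTheta (p c : ℂ) (m : ℕ) (f : ℂ → ℂ) : Prop where
  differentiableOn : DifferentiableOn ℂ f {0}ᶜ
  pow_mul_map_mul : ∀ z ≠ 0, z ^ m * f (p * z) = c * f z

namespace IsMulTheta

variable {p c : ℂ} {m : ℕ} {f : ℂ → ℂ}

lemma sum_const_mul {ι : Type*} {s : Finset ι} {F : ι → ℂ → ℂ}
    (hF : ∀ i ∈ s, IsMulTheta p c m (F i)) (r : ι → ℂ) :
    IsMulTheta p c m fun z => ∑ i ∈ s, r i * F i z where
  differentiableOn := DifferentiableOn.fun_sum fun i hi =>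
    (hF i hi).differentiableOn.const_mul (r i)
  pow_mul_map_mul z hz := by
    rw [mul_sum, mul_sum]
    refine sum_congr rfl fun i hi => ?_
    rw [mul_left_comm, (hF i hi).pow_mul_map_mul z hz, mul_left_comm]

lemma laurentCoeff_add (hf : IsMulTheta p c m f) (hp : p ≠ 0) (n : ℤ) :
    c * laurentCoeff f (n + m) = p ^ n * laurentCoeff f n := by
  rw [← laurentCoeff_comp_mul_left hf.differentiableOn hp, ← laurentCoeff_const_mul,
    ← laurentCoeff_pow_mul (fun z => f (p * z)) m]
  exact laurentCoeff_congr (fun z hz => (hf.pow_mul_map_mul z hz).symm) _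

lemma eqOn_zero_of_laurentCoeff_fin_eq_zero [NeZero m] (hf : IsMulTheta p c m f) (hp : p ≠ 0)
    (hc : c ≠ 0) (h : ∀ k : Fin m, laurentCoeff f k = 0) : EqOn f 0 {0}ᶜ := by
  have hper : Function.Periodic (fun n : ℤ => laurentCoeff f n = 0) m := fun n => by
    simpa [hc, zpow_ne_zero n hp] using congrArg (· = 0) (hf.laurentCoeff_add hp n)
  refine eqOn_zero_of_laurentCoeff_eq_zero hf.differentiableOn fun n => ?_
  have hm : (0 : ℤ) < m := by exact_mod_cast NeZero.pos m
  obtain ⟨k, hk⟩ := Int.eq_ofNat_of_zero_le (n.emod_nonneg hm.ne')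
  have hkm : k < m := by exact_mod_cast hk ▸ n.emod_lt_of_pos hm
  rw [← n.emod_add_mul_ediv m, hk, mul_comm, ← smul_eq_mul, (hper.zsmul (n / m) k).to_iff]
  exact h ⟨k, hkm⟩

lemma exists_sum_mul_eq_zero {ι : Type*} [Fintype ι] [NeZero m] (hm : m < Fintype.card ι)
    {F : ι → ℂ → ℂ} (hF : ∀ i, IsMulTheta p c m (F i)) (hp : p ≠ 0) (hc : c ≠ 0) :
    ∃ r : ι → ℂ, r ≠ 0 ∧ ∀ z ≠ 0, ∑ i, r i * F i z = 0 := by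
  let coeffs : Matrix (Fin m) ι ℂ := Matrix.of fun k i => laurentCoeff (F i) k
  have hker : coeffs.mulVecLin.ker ≠ ⊥ := LinearMap.ker_ne_bot_of_finrank_lt (by simpa using hm)
  obtain ⟨r, hr, hr0⟩ := Submodule.exists_mem_ne_zero_of_ne_bot hker
  refine ⟨r, hr0, (sum_const_mul (fun i _ => hF i) r).eqOn_zero_of_laurentCoeff_fin_eq_zero
    hp hc fun k => ?_⟩
  rw [laurentCoeff_sum fun i _ => (hF i).differentiableOn.const_mul (r i)]
  simp only [laurentCoeff_const_mul]
  simpa [coeffs, Matrix.mulVec, dotProduct, mul_comm] using congrFun hr k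

end IsMulTheta

end MultiplicativeTheta

section QPochhammer

lemma summable_norm_mul_pow {K : Type*} [NormedField K] {q : K} (hq : ‖q‖ < 1) (z : K) :
    Summable fun j : ℕ => ‖z * q ^ j‖ := by
  simpa using (summable_geometric_of_lt_one (norm_nonneg q) hq).mul_left ‖z‖

lemma multipliable_one_sub_mul_pow {K : Type*} [NormedField K] [CompleteSpace K] {q : K}
    (hq : ‖q‖ < 1) (z : K) :
    Multipliable fun j : ℕ => 1 - z * q ^ j := by
  simpa [sub_eq_add_neg] using! multipliable_one_add_of_summable (f := fun j : ℕ => -(z * q ^ j))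
    (by simpa only [norm_neg] using summable_norm_mul_pow hq z)

variable {q : ℂ}

lemma qPochhammerInf_eq_one_sub_mul (hq : ‖q‖ < 1) (z : ℂ) :
    qPochhammerInf z q = (1 - z) * qPochhammerInf (z * q) q := by
  have hshift (j : ℕ) : 1 - z * q ^ (j + 1) = 1 - z * q * q ^ j := by ring
  have hmul := (multipliable_one_sub_mul_pow hq (z * q)).congr fun j => (hshift j).symm
  rw [qPochhammerInf, tprod_eq_zero_mul' (f := fun j => 1 - z * q ^ j) hmul, pow_zero, mul_one,
    qPochhammerInf, tprod_congr hshift]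

lemma qPochhammerInf_ne_zero (hq : ‖q‖ < 1) {z : ℂ} (hz : ∀ j : ℕ, z * q ^ j ≠ 1) :
    qPochhammerInf z q ≠ 0 := by
  simp only [qPochhammerInf, sub_eq_add_neg]
  refine tprod_one_add_ne_zero_of_summable (fun j h => hz j ?_) ?_
  · exact (add_neg_eq_zero.mp h).symm
  · simpa only [norm_neg] using summable_norm_mul_pow hq z

lemma differentiable_qPochhammerInf (hq : ‖q‖ < 1) :
    Differentiable ℂ fun z => qPochhammerInf z q := by
  intro z
  have hlim : HasProdLocallyUniformlyOn (fun (j : ℕ) (w : ℂ) => 1 + -(w * q ^ j))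
      (fun w => ∏' j : ℕ, (1 + -(w * q ^ j))) (ball 0 (‖z‖ + 1)) := by
    refine Summable.hasProdLocallyUniformlyOn_nat_one_add isOpen_ball
      ((summable_geometric_of_lt_one (norm_nonneg q) hq).mul_left (‖z‖ + 1))
      (.of_forall fun j w hw => ?_) fun j => by fun_prop
    rw [norm_neg, norm_mul, norm_pow]
    gcongr
    exact (mem_ball_zero_iff.mp hw).le
  have hdiff := hlim.tendstoLocallyUniformlyOn_finsetRange.differentiableOn
    (.of_forall fun N => by fun_prop) isOpen_ball
  simp only [← sub_eq_add_neg] at hdiff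
  exact hdiff.differentiableAt (isOpen_ball.mem_nhds (by simp))

end QPochhammer

section Theta

variable {p : ℂ}

lemma theta_eq_qPochhammerInf_mul (hp : ‖p‖ < 1) (z : ℂ) :
    theta z p = qPochhammerInf z p * qPochhammerInf (p / z) p := by
  have hfactor (j : ℕ) : 1 - p ^ (j + 1) * z⁻¹ = 1 - p / z * p ^ j := by ring
  simp only [theta, qPochhammerInf, hfactor]
  exact (multipliable_one_sub_mul_pow hp z).tprod_mul (multipliable_one_sub_mul_pow hp _)

lemma theta_one (hp : ‖p‖ < 1) : theta 1 p = 0 := by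
  rw [theta_eq_qPochhammerInf_mul hp, qPochhammerInf_eq_one_sub_mul hp, sub_self, zero_mul,
    zero_mul]

lemma theta_zero_right (z : ℂ) : theta z 0 = 1 - z := by
  rw [theta, tprod_eq_mulSingle 0 fun j hj => by simp [hj]]
  simp

lemma mul_theta_inv (hp : ‖p‖ < 1) {z : ℂ} (hz : z ≠ 0) : z * theta z⁻¹ p = -theta z p := by
  rw [theta_eq_qPochhammerInf_mul hp, theta_eq_qPochhammerInf_mul hp,
    qPochhammerInf_eq_one_sub_mul hp z, qPochhammerInf_eq_one_sub_mul hp z⁻¹, div_inv_eq_mul,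
    mul_comm p z, inv_mul_eq_div]
  field_simp
  ring

lemma theta_mul_left (hp : ‖p‖ < 1) (hp0 : p ≠ 0) (z : ℂ) : theta (p * z) p = theta z⁻¹ p := by
  rw [theta_eq_qPochhammerInf_mul hp, theta_eq_qPochhammerInf_mul hp, div_mul_cancel_left₀ hp0,
    div_inv_eq_mul, mul_comm]

lemma mul_theta_mul_left (hp : ‖p‖ < 1) (hp0 : p ≠ 0) {z : ℂ} (hz : z ≠ 0) :
    z * theta (p * z) p = -theta z p := by
  rw [theta_mul_left hp hp0, mul_theta_inv hp hz]

lemma differentiableOn_theta (hp : ‖p‖ < 1) : DifferentiableOn ℂ (fun z => theta z p) {0}ᶜ := by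
  simp only [theta_eq_qPochhammerInf_mul hp]
  have hdiff := differentiable_qPochhammerInf hp
  exact hdiff.differentiableOn.mul <|
    hdiff.comp_differentiableOn <| (differentiableOn_const p).div differentiableOn_id fun z hz => hz

lemma theta_ne_zero (hp : ‖p‖ < 1) {z : ℂ} (hz : z ≠ 0) (h : ∀ m : ℤ, z ≠ p ^ m) :
    theta z p ≠ 0 := by
  rw [theta_eq_qPochhammerInf_mul hp]
  refine mul_ne_zero (qPochhammerInf_ne_zero hp fun j hj => h (-j) ?_)
    (qPochhammerInf_ne_zero hp fun j hj => h (j + 1 : ℕ) ?_)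
  · rw [zpow_neg, zpow_natCast]
    exact eq_inv_of_mul_eq_one_left hj
  · rw [zpow_natCast]
    rw [div_mul_eq_mul_div, div_eq_one_iff_eq hz] at hj
    rw [pow_succ', hj]

lemma theta_neg_one_ne_zero (hp : ‖p‖ < 1) : theta (-1) p ≠ 0 := by
  refine theta_ne_zero hp (neg_ne_zero.mpr one_ne_zero) fun m hm => ?_
  have hnorm : ‖p‖ ^ m = 1 := by rw [← norm_zpow, ← hm, norm_neg, norm_one]
  rw [zpow_eq_one_iff_right₀ (norm_nonneg p) hp.ne] at hnorm
  norm_num [hnorm] at hm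

/-- The product `θ(x y) θ(x / y)`, divided by `x` to make it alternating in `x` and `y`; it plays
the role of the difference `x - y` in interpolation by theta functions. -/
noncomputable def thetaBracket (p x y : ℂ) : ℂ := theta (x * y) p * theta (x / y) p / x

lemma theta_mul_theta_eq {x : ℂ} (y : ℂ) (hx : x ≠ 0) :
    theta (x * y) p * theta (x / y) p = x * thetaBracket p x y :=
  (mul_div_cancel₀ _ hx).symm

lemma thetaBracket_self (hp : ‖p‖ < 1) {x : ℂ} (hx : x ≠ 0) : thetaBracket p x x = 0 := by
  rw [thetaBracket, div_self hx, theta_one hp, mul_zero, zero_div]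

lemma thetaBracket_swap (hp : ‖p‖ < 1) {x y : ℂ} (hx : x ≠ 0) (hy : y ≠ 0) :
    thetaBracket p y x = -thetaBracket p x y := by
  have hinv := mul_theta_inv hp (div_ne_zero hx hy)
  rw [inv_div] at hinv
  rw [thetaBracket, thetaBracket, mul_comm y x, ← neg_div, ← mul_neg, ← hinv]
  field_simp

lemma thetaBracket_ne_zero (hp : ‖p‖ < 1) {x y : ℂ} (hx : x ≠ 0) (hy : y ≠ 0)
    (hmul : ∀ m : ℤ, x * y ≠ p ^ m) (hdiv : ∀ m : ℤ, x / y ≠ p ^ m) : thetaBracket p x y ≠ 0 :=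
  div_ne_zero (mul_ne_zero (theta_ne_zero hp (mul_ne_zero hx hy) hmul)
    (theta_ne_zero hp (div_ne_zero hx hy) hdiv)) hx

lemma isMulTheta_thetaBracket (hp : ‖p‖ < 1) (hp0 : p ≠ 0) {y : ℂ} (hy : y ≠ 0) :
    IsMulTheta p p⁻¹ 2 fun x => thetaBracket p x y where
  differentiableOn := by
    have hθ := differentiableOn_theta hp
    have hmul : DifferentiableOn ℂ (fun x => theta (x * y) p) {0}ᶜ :=
      hθ.comp (differentiableOn_id.mul_const y) fun x hx => mul_ne_zero hx hy
    have hdiv : DifferentiableOn ℂ (fun x => theta (x / y) p) {0}ᶜ :=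
      hθ.comp (differentiableOn_id.div_const y) fun x hx => div_ne_zero hx hy
    exact (hmul.mul hdiv).div differentiableOn_id fun x hx => hx
  pow_mul_map_mul x hx := by
    have hmul := mul_theta_mul_left hp hp0 (mul_ne_zero hx hy)
    have hdiv := mul_theta_mul_left hp hp0 (div_ne_zero hx hy)
    calc x ^ 2 * thetaBracket p (p * x) y
        = (x * y * theta (p * (x * y)) p) * (x / y * theta (p * (x / y)) p) / (p * x) := by
          rw [thetaBracket, mul_assoc p x y, mul_div_assoc p x y]
          field_simp
      _ = p⁻¹ * thetaBracket p x y := by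
          rw [hmul, hdiv, thetaBracket]
          field_simp

/-- The three-term relation of Weierstrass: a linear dependency between the theta functions of
degree two attached to `b`, `c` and `d` is found, up to a factor, by evaluating it there. -/
lemma thetaBracket_plucker (hp : ‖p‖ < 1) {x b c d : ℂ} (hx : x ≠ 0) (hb : b ≠ 0) (hc : c ≠ 0)
    (hd : d ≠ 0) :
    thetaBracket p x b * thetaBracket p c d - thetaBracket p x c * thetaBracket p b d +
      thetaBracket p x d * thetaBracket p b c = 0 := by
  rcases eq_or_ne p 0 with rfl | hp0
  · simp only [thetaBracket, theta_zero_right]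
    field_simp
    ring
  have hF : ∀ i : Fin 3, IsMulTheta p p⁻¹ 2 fun t => thetaBracket p t (![b, c, d] i) := by
    simp [Fin.forall_fin_succ, isMulTheta_thetaBracket hp hp0, hb, hc, hd]
  obtain ⟨r, hr0, hr⟩ := IsMulTheta.exists_sum_mul_eq_zero (by simp) hF hp0 (inv_ne_zero hp0)
  simp only [Fin.sum_univ_three, Matrix.cons_val] at hr
  have hrb := hr b hb
  have hrc := hr c hc
  have hrd := hr d hd
  have hrx := hr x hx
  rw [thetaBracket_self hp hb] at hrb
  rw [thetaBracket_self hp hc, thetaBracket_swap hp hb hc] at hrc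
  rw [thetaBracket_self hp hd, thetaBracket_swap hp hb hd, thetaBracket_swap hp hc hd] at hrd
  by_contra hne
  refine hr0 (funext fun i => (mul_eq_zero_iff_right hne).mp ?_)
  fin_cases i <;> simp only [Fin.reduceFinMk, Fin.zero_eta, Fin.mk_one]
  · linear_combination thetaBracket p c d * hrx - thetaBracket p x d * hrc +
      thetaBracket p x c * hrd
  · linear_combination (-thetaBracket p b d) * hrx + thetaBracket p x d * hrb -
      thetaBracket p x b * hrd
  · linear_combination thetaBracket p b c * hrx - thetaBracket p x c * hrb +
      thetaBracket p x b * hrc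

lemma exists_thetaBracket_eq (hp : ‖p‖ < 1) : ∃ u v : ℂ → ℂ, ∀ x y : ℂ, x ≠ 0 → y ≠ 0 →
    thetaBracket p x y = u x * v y - v x * u y := by
  have h1 : (-1 : ℂ) ≠ 0 := neg_ne_zero.mpr one_ne_zero
  have hD : thetaBracket p 1 (-1) ≠ 0 := by
    simp [thetaBracket, theta_neg_one_ne_zero hp]
  refine ⟨fun x => thetaBracket p x 1 / thetaBracket p 1 (-1), fun x => thetaBracket p x (-1),
    fun x y hx hy => ?_⟩
  field_simp
  linear_combination thetaBracket_plucker hp hx hy one_ne_zero h1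

end Theta

section Interpolation

variable {K ι κ : Type*} [Field K]

lemma exists_forall_add_mul_ne_zero [Infinite K] [Finite ι] (u v : ι → K)
    (h : ∀ i, u i = 0 → v i ≠ 0) : ∃ c, ∀ i, v i + c * u i ≠ 0 := by
  obtain ⟨c, hc⟩ := (Set.finite_range fun i => -(v i / u i)).infinite_compl.nonempty
  refine ⟨c, fun i hi => ?_⟩
  rcases eq_or_ne (u i) 0 with hu | hu
  · exact h i hu (by simpa [hu] using hi)
  · refine hc ⟨i, ?_⟩
    field_simp
    linear_combination -hi

variable [Fintype ι] [DecidableEq ι]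

lemma sum_eval_div_prod_sub_eq_zero {x : ι → K} (hx : Function.Injective x) {P : Polynomial K}
    (hP : P.natDegree + 1 < Fintype.card ι) :
    ∑ i, P.eval (x i) / ∏ j ∈ univ.erase i, (x i - x j) = 0 := by
  have hdeg : P.degree < #(univ : Finset ι) :=
    Polynomial.degree_le_natDegree.trans_lt (by exact_mod_cast (by rw [card_univ]; omega))
  rw [← Lagrange.coeff_eq_sum hx.injOn hdeg, card_univ]
  exact Polynomial.coeff_eq_zero_of_natDegree_lt (by omega)

variable [Fintype κ]

lemma sum_prod_det_div_prod_det_eq_zero_of_ne_zero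
    (hcard : Fintype.card ι = Fintype.card κ + 2) (u v : ι → K) (α β : κ → K) (hv : ∀ i, v i ≠ 0)
    (hdet : ∀ i j, i ≠ j → u i * v j - v i * u j ≠ 0) :
    ∑ k, (∏ j, (u k * β j - v k * α j)) / ∏ j ∈ univ.erase k, (u k * v j - v k * u j) = 0 := by
  let x : ι → K := fun i => u i / v i
  let P : Polynomial K := ∏ j, (Polynomial.C (β j) * Polynomial.X - Polynomial.C (α j))
  have hxv (i : ι) : x i * v i = u i := div_mul_cancel₀ _ (hv i)
  have hdet_eq (i j : ι) : u i * v j - v i * u j = v i * v j * (x i - x j) := by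
    rw [← hxv i, ← hxv j]
    ring
  have hx : Function.Injective x := fun i j hij => by
    by_contra h
    exact hdet i j h (by rw [hdet_eq, hij, sub_self, mul_zero])
  have hP : P.natDegree ≤ Fintype.card κ := by
    refine (Polynomial.natDegree_prod_le _ _).trans ?_
    refine (sum_le_card_nsmul univ _ 1 fun j _ => ?_).trans (by simp)
    compute_degree
  have hnum (k : ι) : ∏ j, (u k * β j - v k * α j) = v k ^ Fintype.card κ * P.eval (x k) := by
    rw [Polynomial.eval_prod, ← card_univ, ← prod_const, ← prod_mul_distrib]
    refine prod_congr rfl fun j _ => ?_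
    simp only [Polynomial.eval_sub, Polynomial.eval_mul, Polynomial.eval_C, Polynomial.eval_X]
    rw [← hxv k]
    ring
  have hden (k : ι) : ∏ j ∈ univ.erase k, (u k * v j - v k * u j) =
      v k ^ Fintype.card κ * ((∏ j, v j) * ∏ j ∈ univ.erase k, (x k - x j)) := by
    simp only [hdet_eq, prod_mul_distrib, prod_const]
    rw [card_erase_of_mem (mem_univ k), card_univ, hcard, ← mul_prod_erase univ v (mem_univ k),
      show Fintype.card κ + 2 - 1 = Fintype.card κ + 1 by omega]
    ring
  have hterm (k : ι) :
      (∏ j, (u k * β j - v k * α j)) / ∏ j ∈ univ.erase k, (u k * v j - v k * u j) =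
        (∏ j, v j)⁻¹ * (P.eval (x k) / ∏ j ∈ univ.erase k, (x k - x j)) := by
    rw [hnum, hden, mul_div_mul_left _ _ (pow_ne_zero _ (hv k)), div_mul_eq_div_div_swap,
      div_eq_inv_mul]
  simp only [hterm, ← mul_sum]
  rw [sum_eval_div_prod_sub_eq_zero hx (by omega), mul_zero]

lemma sum_prod_det_div_prod_det_eq_zero [Infinite K] (hcard : Fintype.card ι = Fintype.card κ + 2)
    (u v : ι → K) (α β : κ → K) (hdet : ∀ i j, i ≠ j → u i * v j - v i * u j ≠ 0) :
    ∑ k, (∏ j, (u k * β j - v k * α j)) / ∏ j ∈ univ.erase k, (u k * v j - v k * u j) = 0 := by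
  have : Nontrivial ι := Fintype.one_lt_card_iff_nontrivial.mp (by omega)
  have huv (i : ι) (hu : u i = 0) : v i ≠ 0 := fun hv => by
    obtain ⟨j, hj⟩ := exists_ne i
    exact hdet i j hj.symm (by simp [hu, hv])
  -- The shear `v ↦ v + c u` preserves the determinants and moves all nodes `u / v` off infinity.
  obtain ⟨c, hc⟩ := exists_forall_add_mul_ne_zero u v huv
  have hshear (a b a' b' : K) : a * (b' + c * a') - (b + c * a) * a' = a * b' - b * a' := by ring
  simpa only [hshear] using sum_prod_det_div_prod_det_eq_zero_of_ne_zero hcard u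
    (fun i => v i + c * u i) α (fun j => β j + c * α j) hc (by simpa only [hshear] using hdet)

end Interpolation

theorem theta_partial_fraction_sum_BC (p : ℂ) (hp : ‖p‖ < 1) (n : ℕ) (hn : 2 ≤ n)
    (a : Fin n → ℂ) (b : Fin (n - 2) → ℂ) (ha : ∀ j, a j ≠ 0) (hb : ∀ j, b j ≠ 0)
    (hdist : ∀ j k, j ≠ k → ∀ m : ℤ, a j * a k ≠ p ^ m ∧ a j / a k ≠ p ^ m) :
    ∑ k, a k * (∏ j, theta (a k * b j) p * theta (a k / b j) p) /
        ∏ j ∈ Finset.univ.erase k, theta (a k * a j) p * theta (a k / a j) p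
      = 0 := by
  obtain ⟨u, v, huv⟩ := exists_thetaBracket_eq hp
  have hdet (i j : Fin n) (hij : i ≠ j) : u (a i) * v (a j) - v (a i) * u (a j) ≠ 0 := by
    rw [← huv _ _ (ha i) (ha j)]
    exact thetaBracket_ne_zero hp (ha i) (ha j) (fun m => (hdist i j hij m).1)
      fun m => (hdist i j hij m).2
  have hcard : Fintype.card (Fin n) = Fintype.card (Fin (n - 2)) + 2 := by
    simpa using (Nat.sub_add_cancel hn).symm
  rw [← sum_prod_det_div_prod_det_eq_zero hcard (u ∘ a) (v ∘ a) (u ∘ b) (v ∘ b) hdet]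
  refine Finset.sum_congr rfl fun k _ => ?_
  simp only [theta_mul_theta_eq _ (ha k), huv _ _ (ha _) (ha _), huv _ _ (ha _) (hb _),
    Finset.prod_mul_distrib, Finset.prod_const, Function.comp_apply]
  rw [Finset.card_erase_of_mem (Finset.mem_univ k), Finset.card_univ, Finset.card_univ, hcard,
    Fintype.card_fin, ← mul_assoc, ← pow_succ', Nat.add_succ_sub_one,
    mul_div_mul_left _ _ (pow_ne_zero _ (ha k))]
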